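/- Let T : ℝⁿ → ℝ^{n×n} be a smooth matrix-valued map such that T(q) is invertible for every q ∈ ℝⁿ, and regard its columns (T)_i = T e_i as smooth vector fields on ℝⁿ. Then the following are equivalent: (i) the columns of T pairwise commute, i.e. the Lie bracket [(T)_i, (T)_j](q) = 0 for all q ∈ ℝⁿ and all i, j ∈ {1,…,n}; (ii) there exists a smooth map Q : ℝⁿ → ℝⁿ whose Jacobian matrix satisfies ∇Q(q) = T(q)^{-1} for all q ∈ ℝⁿ. -/

import Mathlib

open Matrix

/-- The Jacobian matrix of a map `X : ℝⁿ → ℝⁿ` at a point `q`: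
its `(i,j)` entry is the `i`-th component of the derivative of `X` in the
direction of the `j`-th basis vector. -/
noncomputable def jacobianMatrix {n : ℕ} (X : (Fin n → ℝ) → (Fin n → ℝ)) (q : Fin n → ℝ) :
    Matrix (Fin n) (Fin n) ℝ :=
  Matrix.of fun i j => fderiv ℝ X q (Pi.single j 1) i

/-- The Lie bracket of two vector fields on ℝⁿ:
`[X,Y](q) = DY(q) X(q) − DX(q) Y(q)`. -/
noncomputable def lieBracket {n : ℕ} (X Y : (Fin n → ℝ) → (Fin n → ℝ)) (q : Fin n → ℝ) :
    Fin n → ℝ :=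
  (jacobianMatrix Y q) *ᵥ X q - (jacobianMatrix X q) *ᵥ Y q

/-- The `j`-th column of a matrix-valued map, viewed as a vector field. -/
def matCol {n : ℕ} (T : (Fin n → ℝ) → Matrix (Fin n) (Fin n) ℝ) (j : Fin n) :
    (Fin n → ℝ) → (Fin n → ℝ) :=
  fun q i => T q i j

/-
Write `ω q = (T q)⁻¹`. Differentiating `ω (T v) = v` for constant `v` gives
`dω(u) (T v) = -ω (dT(u) v)`, hence `dω(T v) (T w) - dω(T w) (T v) = -ω [T v, T w]`. Since the
vectors `T q v` exhaust the tangent space at `q`, the fields `T v` commute iff the one-form `ω` is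
closed, which by the Poincaré lemma on a convex open set means `ω = dQ` for some `Q`.
-/

open Topology

section LinearFrame

variable {𝕜 E F : Type*} [NontriviallyNormedField 𝕜]
  [NormedAddCommGroup E] [NormedSpace 𝕜 E] [NormedAddCommGroup F] [NormedSpace 𝕜 F]

theorem contDiffOn_succ_of_hasFDerivAt {s : Set E} {f : E → F} {f' : E → E →L[𝕜] F} {k : ℕ∞}
    (hs : IsOpen s) (hf : ∀ x ∈ s, HasFDerivAt f (f' x) x) (hf' : ContDiffOn 𝕜 k f' s) :
    ContDiffOn 𝕜 (k + 1) f s :=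
  (contDiffOn_succ_iff_fderiv_of_isOpen hs).2
    ⟨fun x hx => (hf x hx).differentiableAt.differentiableWithinAt, fun h => by simp at h,
      hf'.congr fun x hx => (hf x hx).fderiv⟩

section Inverse

variable {G : Type*} [NormedAddCommGroup G] [NormedSpace 𝕜 G] [CompleteSpace F]
  {T : E → F →L[𝕜] G} {q : E}

theorem differentiableAt_clm_inverse (hT : DifferentiableAt 𝕜 T q) (hinv : (T q).IsInvertible) :
    DifferentiableAt 𝕜 (fun p => (T p).inverse) q :=
  (hinv.contDiffAt_map_inverse.differentiableAt one_ne_zero).comp q hT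

theorem contDiffOn_clm_inverse {s : Set E} {k : WithTop ℕ∞} (hT : ContDiffOn 𝕜 k T s)
    (hinv : ∀ p ∈ s, (T p).IsInvertible) : ContDiffOn 𝕜 k (fun p => (T p).inverse) s :=
  fun p hp => (hinv p hp).contDiffAt_map_inverse.comp_contDiffWithinAt p (hT p hp)

theorem fderiv_clm_inverse_apply (hT : DifferentiableAt 𝕜 T q) (hinv : (T q).IsInvertible)
    (u : E) (v : F) :
    fderiv 𝕜 (fun p => (T p).inverse) q u (T q v) = -(T q).inverse (fderiv 𝕜 T q u v) := by
  have hconst : (fun p => (T p).inverse (T p v)) =ᶠ[𝓝 q] fun _ => v := by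
    obtain ⟨e, he⟩ := hinv
    filter_upwards [hT.continuousAt (he ▸ e.nhds)] with p hp
    exact ContinuousLinearMap.IsInvertible.inverse_apply_self hp v
  have hderiv := DFunLike.congr_fun (hconst.fderiv_eq (𝕜 := 𝕜)) u
  have hTv : DifferentiableAt 𝕜 (fun p => T p v) q := hT.clm_apply (differentiableAt_const v)
  rw [fderiv_clm_apply (differentiableAt_clm_inverse hT hinv) hTv,
    fderiv_clm_apply hT (differentiableAt_const v)] at hderiv
  exact eq_neg_of_add_eq_zero_right (by simpa using hderiv)

end Inverse

variable {T : E → F →L[𝕜] E} {q : E}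

theorem lieBracket_clm_apply (hT : DifferentiableAt 𝕜 T q) (v w : F) :
    VectorField.lieBracket 𝕜 (T · v) (T · w) q =
      fderiv 𝕜 T q (T q v) w - fderiv 𝕜 T q (T q w) v := by
  simp [VectorField.lieBracket, fderiv_clm_apply hT (differentiableAt_const _)]

theorem forall_lieBracket_clm_apply_eq_zero_iff_forall_basis {ι : Type*}
    (b : Module.Basis ι 𝕜 F) (hT : DifferentiableAt 𝕜 T q) :
    (∀ v w, VectorField.lieBracket 𝕜 (T · v) (T · w) q = 0) ↔
      ∀ i j, VectorField.lieBracket 𝕜 (T · (b i)) (T · (b j)) q = 0 := by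
  refine ⟨fun h i j => h (b i) (b j), fun h => ?_⟩
  simp only [lieBracket_clm_apply hT, sub_eq_zero] at h ⊢
  let B : F →ₗ[𝕜] F →ₗ[𝕜] E := (fderiv 𝕜 T q ∘L T q).toLinearMap₁₂
  have hB : B = B.flip := LinearMap.ext_basis b b h
  exact LinearMap.congr_fun₂ hB

theorem forall_lieBracket_clm_apply_eq_zero_iff_fderiv_inverse_symmetric [CompleteSpace F]
    (hT : DifferentiableAt 𝕜 T q) (hinv : (T q).IsInvertible) :
    (∀ v w, VectorField.lieBracket 𝕜 (T · v) (T · w) q = 0) ↔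
      ∀ x y, fderiv 𝕜 (fun p => (T p).inverse) q x y =
        fderiv 𝕜 (fun p => (T p).inverse) q y x := by
  simp only [lieBracket_clm_apply hT, sub_eq_zero, hinv.surjective.forall,
    fderiv_clm_inverse_apply hT hinv, neg_inj, hinv.inverse.injective.eq_iff]

end LinearFrame

section MulVecCLM

variable {𝕜 ι : Type*} [NontriviallyNormedField 𝕜] [CompleteSpace 𝕜] [Fintype ι]

/-- The continuous linear endomorphism `v ↦ M *ᵥ v` of `ι → 𝕜` attached to a square matrix `M`.
Matrix-valued maps are differentiated through it, as `Matrix ι ι 𝕜` has no canonical norm. -/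
noncomputable def mulVecCLM (M : Matrix ι ι 𝕜) : (ι → 𝕜) →L[𝕜] (ι → 𝕜) :=
  LinearMap.toContinuousLinearMap M.mulVecLin

theorem mulVecCLM_apply (M : Matrix ι ι 𝕜) (v : ι → 𝕜) : mulVecCLM M v = M *ᵥ v := rfl

theorem mulVecCLM_injective : Function.Injective (mulVecCLM (𝕜 := 𝕜) (ι := ι)) := by
  classical
  exact LinearMap.toContinuousLinearMap.injective.comp Matrix.toLin'.injective

theorem contDiff_mulVecCLM {E : Type*} [NormedAddCommGroup E] [NormedSpace 𝕜 E]
    {k : WithTop ℕ∞} {T : E → Matrix ι ι 𝕜} (hT : ∀ i j, ContDiff 𝕜 k fun q => T q i j) :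
    ContDiff 𝕜 k fun q => mulVecCLM (T q) := by
  refine contDiff_clm_apply_iff.2 fun v => contDiff_pi.2 fun i => ?_
  simp only [mulVecCLM_apply, Matrix.mulVec, dotProduct]
  exact ContDiff.sum fun j _ => (hT i j).mul contDiff_const

theorem mulVecCLM_comp_mulVecCLM (M N : Matrix ι ι 𝕜) :
    mulVecCLM M ∘L mulVecCLM N = mulVecCLM (M * N) := by
  ext1 v
  exact M.mulVec_mulVec v N

variable [DecidableEq ι]

theorem mulVecCLM_one : mulVecCLM (1 : Matrix ι ι 𝕜) = .id 𝕜 (ι → 𝕜) := by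
  ext1 v
  exact Matrix.one_mulVec v

theorem mulVecCLM_comp_mulVecCLM_inv {M : Matrix ι ι 𝕜} (hM : IsUnit M) :
    mulVecCLM M ∘L mulVecCLM M⁻¹ = .id 𝕜 (ι → 𝕜) := by
  rw [mulVecCLM_comp_mulVecCLM, M.mul_nonsing_inv (M.isUnit_iff_isUnit_det.1 hM), mulVecCLM_one]

theorem mulVecCLM_inv_comp_mulVecCLM {M : Matrix ι ι 𝕜} (hM : IsUnit M) :
    mulVecCLM M⁻¹ ∘L mulVecCLM M = .id 𝕜 (ι → 𝕜) := by
  rw [mulVecCLM_comp_mulVecCLM, M.nonsing_inv_mul (M.isUnit_iff_isUnit_det.1 hM), mulVecCLM_one]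

theorem isInvertible_mulVecCLM {M : Matrix ι ι 𝕜} (hM : IsUnit M) : (mulVecCLM M).IsInvertible :=
  .of_inverse (mulVecCLM_comp_mulVecCLM_inv hM) (mulVecCLM_inv_comp_mulVecCLM hM)

theorem inverse_mulVecCLM {M : Matrix ι ι 𝕜} (hM : IsUnit M) :
    (mulVecCLM M).inverse = mulVecCLM M⁻¹ :=
  ContinuousLinearMap.inverse_eq (mulVecCLM_comp_mulVecCLM_inv hM)
    (mulVecCLM_inv_comp_mulVecCLM hM)

end MulVecCLM

section Coordinates

variable {n : ℕ}

theorem mulVecCLM_jacobianMatrix (X : (Fin n → ℝ) → (Fin n → ℝ)) (q : Fin n → ℝ) :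
    mulVecCLM (jacobianMatrix X q) = fderiv ℝ X q := by
  refine ContinuousLinearMap.coe_injective ((Pi.basisFun ℝ (Fin n)).ext fun j => ?_)
  ext i
  simp [mulVecCLM_apply, jacobianMatrix]

theorem jacobianMatrix_eq_inv_iff {X : (Fin n → ℝ) → (Fin n → ℝ)} {q : Fin n → ℝ}
    {M : Matrix (Fin n) (Fin n) ℝ} (hM : IsUnit M) :
    jacobianMatrix X q = M⁻¹ ↔ fderiv ℝ X q = (mulVecCLM M).inverse := by
  rw [← mulVecCLM_injective.eq_iff, mulVecCLM_jacobianMatrix, inverse_mulVecCLM hM]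

theorem lieBracket_eq_vectorField_lieBracket (X Y : (Fin n → ℝ) → (Fin n → ℝ)) :
    lieBracket X Y = VectorField.lieBracket ℝ X Y := by
  ext1 q
  simp only [lieBracket, VectorField.lieBracket, ← mulVecCLM_apply, mulVecCLM_jacobianMatrix]

variable {T : (Fin n → ℝ) → Matrix (Fin n) (Fin n) ℝ}

theorem matCol_eq_mulVecCLM_basisFun (j : Fin n) :
    matCol T j = fun q => mulVecCLM (T q) (Pi.basisFun ℝ (Fin n) j) := by
  ext q i
  simp [matCol, mulVecCLM_apply]

theorem forall_lieBracket_matCol_eq_zero_iff {q : Fin n → ℝ}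
    (hT : DifferentiableAt ℝ (fun p => mulVecCLM (T p)) q) :
    (∀ i j, lieBracket (matCol T i) (matCol T j) q = 0) ↔
      ∀ v w, VectorField.lieBracket ℝ (fun p => mulVecCLM (T p) v)
        (fun p => mulVecCLM (T p) w) q = 0 := by
  simp only [lieBracket_eq_vectorField_lieBracket, matCol_eq_mulVecCLM_basisFun]
  exact (forall_lieBracket_clm_apply_eq_zero_iff_forall_basis (Pi.basisFun ℝ (Fin n)) hT).symm

end Coordinates

theorem stmt0_general {E F : Type*} [NormedAddCommGroup E] [NormedSpace ℝ E]
    [NormedAddCommGroup F] [NormedSpace ℝ F] [CompleteSpace F] {s : Set E} (hs : Convex ℝ s)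
    (hso : IsOpen s) {k : ℕ∞} {T : E → F →L[ℝ] E} (hTd : DifferentiableOn ℝ T s)
    (hTk : ContDiffOn ℝ k T s) (hinv : ∀ q ∈ s, (T q).IsInvertible) :
    (∀ q ∈ s, ∀ v w, VectorField.lieBracket ℝ (T · v) (T · w) q = 0) ↔
      ∃ Q : E → F, ContDiffOn ℝ (k + 1) Q s ∧ ∀ q ∈ s, fderiv ℝ Q q = (T q).inverse := by
  have hTat (q) (hq : q ∈ s) : DifferentiableAt ℝ T q := hTd.differentiableAt (hso.mem_nhds hq)
  have hωat (q) (hq : q ∈ s) : DifferentiableAt ℝ (fun p => (T p).inverse) q :=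
    differentiableAt_clm_inverse (hTat q hq) (hinv q hq)
  have hclosed (q) (hq : q ∈ s) :=
    forall_lieBracket_clm_apply_eq_zero_iff_fderiv_inverse_symmetric (hTat q hq) (hinv q hq)
  constructor
  · intro hcomm
    obtain ⟨Q, hQ⟩ := hs.exists_forall_hasFDerivAt_of_fderiv_symmetric hso
      (fun q hq => (hωat q hq).differentiableWithinAt) fun q hq => (hclosed q hq).1 (hcomm q hq)
    exact ⟨Q, contDiffOn_succ_of_hasFDerivAt hso hQ (contDiffOn_clm_inverse hTk hinv),
      fun q hq => (hQ q hq).fderiv⟩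
  · rintro ⟨Q, hQ, hfderiv⟩ q hq
    refine (hclosed q hq).2 (second_derivative_symmetric_of_eventually (f := Q) ?_
      (hωat q hq).hasFDerivAt)
    filter_upwards [hso.mem_nhds hq] with p hp
    have hQp : DifferentiableAt ℝ Q p :=
      (hQ.differentiableOn (by simp)).differentiableAt (hso.mem_nhds hp)
    exact hfderiv p hp ▸ hQp.hasFDerivAt

/-- for a smooth, everywhere invertible matrix-valued map `T`,
the columns of `T` pairwise commute as vector fields iff there is a smooth map
`Q : ℝⁿ → ℝⁿ` whose Jacobian is `T(q)⁻¹` everywhere. -/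
theorem stmt0 {n : ℕ} (T : (Fin n → ℝ) → Matrix (Fin n) (Fin n) ℝ)
    (hTsmooth : ∀ i j : Fin n, ContDiff ℝ (⊤ : ℕ∞) fun q => T q i j)
    (hTinv : ∀ q : Fin n → ℝ, IsUnit (T q)) :
    (∀ (q : Fin n → ℝ) (i j : Fin n), lieBracket (matCol T i) (matCol T j) q = 0) ↔
      (∃ Q : (Fin n → ℝ) → (Fin n → ℝ), ContDiff ℝ (⊤ : ℕ∞) Q ∧
        ∀ q : Fin n → ℝ, jacobianMatrix Q q = (T q)⁻¹) := by
  have hT : ContDiff ℝ (⊤ : ℕ∞) fun q => mulVecCLM (T q) := contDiff_mulVecCLM hTsmooth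
  have hTd : Differentiable ℝ fun q => mulVecCLM (T q) := hT.differentiable (by simp)
  simpa [forall_lieBracket_matCol_eq_zero_iff (hTd _), jacobianMatrix_eq_inv_iff (hTinv _),
    contDiffOn_univ] using stmt0_general convex_univ isOpen_univ hTd.differentiableOn
      hT.contDiffOn fun q _ => isInvertible_mulVecCLM (hTinv q)
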